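/- arXiv:2109.00726 — 2 statements merged into one kernel-verified Lean document; each statement's English description precedes it below -/
import Mathlib

section
/- Let (R, m) be a Noetherian local ring, I an m-primary ideal, and M a finitely generated R-module of Krull dimension t ≥ 2. If P and Q are polynomials with rational coefficients of degrees t and t−1 respectively such that ℓ_R(M/I^{n+1}M) = P(n) and ℓ_R((I^{n+1}M :_M m)/I^{n+1}M) = Q(n) for all sufficiently large n, then (t−1)! times the leading coefficient of Q is at most t! times the leading coefficient of P; that is, the irreducible multiplicity f⁰_I(M) is at most the Hilbert multiplicity e⁰_I(M). -/
open IsLocalRing Submodule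

/-- The colon submodule `(N :_M J) = {x ∈ M ∣ J x ⊆ N}`. -/
def Submodule.colonBy {R M : Type*} [CommRing R] [AddCommGroup M] [Module R M]
    (N : Submodule R M) (J : Ideal R) : Submodule R M where
  carrier := {x | ∀ r ∈ J, r • x ∈ N}
  add_mem' := fun {a b} ha hb r hr => by
    rw [smul_add]; exact N.add_mem (ha r hr) (hb r hr)
  zero_mem' := fun r hr => by rw [smul_zero]; exact N.zero_mem
  smul_mem' := fun c {x} hx r hr => by
    rw [smul_comm]; exact N.smul_mem c (hx r hr)

/-- The length of a module: the height of `⊤` in its lattice of submodules. -/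
noncomputable def moduleLength (R M : Type*) [Ring R] [AddCommGroup M] [Module R M] : ℕ∞ :=
  Order.height (⊤ : Submodule R M)

/-!
Write `Mₙ = Iⁿ M`. The submodules `Mⱼ ∩ (Mⱼ₊₂ : I)` form an `I`-filtration contained in the
`I`-adic one, so by Artin–Rees it is stable; stability gives `Mⱼ ∩ (Mⱼ₊₂ : I) ⊆ Mⱼ₊₁` for
`j ≫ 0`, and by induction `M_d ∩ (Mₙ₊₁ : I) ⊆ Mₙ` for `n ≥ d ≫ 0`. Hence the length of
`(Mₙ₊₁ : 𝔪) / Mₙ₊₁` is at most `ℓ(M / M_d) + ℓ(Mₙ / Mₙ₊₁)`. The first summand is constant in `n`,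
the second is `P(n) - P(n - 1)`, a polynomial of degree `t - 1 ≥ 1` with leading coefficient
`t · lc(P)`, and comparing leading coefficients gives the claim.
-/

open Filter Polynomial

lemma moduleLength_eq_length (R M : Type*) [Ring R] [AddCommGroup M] [Module R M] :
    moduleLength R M = Module.length R M :=
  (Module.length_eq_height R M).symm

section Length

variable {R M : Type*} [Ring R] [AddCommGroup M] [Module R M]

lemma length_eq_length_submodule_add_length_quotient (N : Submodule R M) :
    Module.length R M = Module.length R N + Module.length R (M ⧸ N) :=
  Module.length_eq_add_of_exact N.subtype N.mkQ N.subtype_injective N.mkQ_surjective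
    (LinearMap.exact_subtype_mkQ N)

lemma length_le_length_add_length_quotient_of_inf_le {B C D : Submodule R M} (h : D ⊓ C ≤ B) :
    Module.length R D ≤ Module.length R B + Module.length R (M ⧸ C) := by
  have hsub : Module.length R (C.comap D.subtype) ≤ Module.length R B :=
    Module.length_le_of_injective (D.subtype.restrict fun x hx ↦ h ⟨x.2, hx⟩) fun _ _ hxy ↦
      Subtype.ext <| Subtype.ext <| congrArg (Subtype.val : B → M) hxy
  have hquot : Module.length R (D ⧸ C.comap D.subtype) ≤ Module.length R (M ⧸ C) :=
    Module.length_le_of_injective (mapQ _ C D.subtype le_rfl) <| by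
      rw [← LinearMap.ker_eq_bot, ker_mapQ, mkQ_map_self]
  rw [length_eq_length_submodule_add_length_quotient (C.comap D.subtype)]
  exact add_le_add hsub hquot

lemma map_mkQ_inf_map_mkQ_le {A B C D : Submodule R M} (hAC : A ≤ C) (h : D ⊓ C ≤ B) :
    D.map A.mkQ ⊓ C.map A.mkQ ≤ B.map A.mkQ := by
  rintro _ ⟨⟨x, hxD, rfl⟩, hx⟩
  have hxC : x ∈ (C.map A.mkQ).comap A.mkQ := hx
  rw [comap_map_mkQ, sup_eq_right.2 hAC] at hxC
  exact mem_map_of_mem (h ⟨hxD, hxC⟩)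

lemma length_map_mkQ_add_length_quotient_le {A B C D : Submodule R M} (hAB : A ≤ B) (hAC : A ≤ C)
    (h : D ⊓ C ≤ B) :
    Module.length R (D.map A.mkQ) + Module.length R (M ⧸ B) ≤
      Module.length R (M ⧸ A) + Module.length R (M ⧸ C) :=
  calc Module.length R (D.map A.mkQ) + Module.length R (M ⧸ B)
    _ ≤ Module.length R (B.map A.mkQ) + Module.length R ((M ⧸ A) ⧸ C.map A.mkQ)
          + Module.length R (M ⧸ B) := by
        gcongr
        exact length_le_length_add_length_quotient_of_inf_le (map_mkQ_inf_map_mkQ_le hAC h)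
    _ = Module.length R (B.map A.mkQ) + Module.length R ((M ⧸ A) ⧸ B.map A.mkQ)
          + Module.length R (M ⧸ C) := by
        rw [(quotientQuotientEquivQuotient A B hAB).length_eq,
          (quotientQuotientEquivQuotient A C hAC).length_eq, add_right_comm]
    _ = Module.length R (M ⧸ A) + Module.length R (M ⧸ C) := by
        rw [← length_eq_length_submodule_add_length_quotient]

end Length

section Colon

variable {R M : Type*} [CommRing R] [AddCommGroup M] [Module R M] {I J : Ideal R}

lemma colonBy_mono {N N' : Submodule R M} (hN : N ≤ N') (hIJ : I ≤ J) :
    N.colonBy J ≤ N'.colonBy I :=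
  fun _ hx r hr ↦ hN (hx r (hIJ hr))

lemma smul_colonBy_le (N : Submodule R M) (I : Ideal R) : I • N.colonBy I ≤ N :=
  smul_le.2 fun r hr _ hx ↦ hx r hr

/-- The filtration `j ↦ Fⱼ ∩ (Fⱼ₊₂ :_M I)` attached to an `I`-filtration `F`. Modulo `Fⱼ₊₁` its
`j`-th term is the part of degree `j` of the associated graded module `⨁ Fⱼ / Fⱼ₊₁` that is killed
by the degree-one part `I / I²` of the associated graded ring; stability of this filtration makes
that part vanish for large `j`. -/
def colonFiltration (F : I.Filtration M) : I.Filtration M where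
  N j := F.N j ⊓ (F.N (j + 2)).colonBy I
  mono j := inf_le_inf (F.mono j) (colonBy_mono (F.mono (j + 2)) le_rfl)
  smul_le j := le_inf ((smul_mono_right I inf_le_left).trans (F.smul_le j)) <|
    calc I • (F.N j ⊓ (F.N (j + 2)).colonBy I)
      _ ≤ F.N (j + 2) := (smul_mono_right I inf_le_right).trans (smul_colonBy_le _ I)
      _ ≤ (F.N (j + 3)).colonBy I := fun _ hx _ hr ↦ F.smul_le (j + 2) (smul_mem_smul hr hx)

variable [IsNoetherianRing R] [Module.Finite R M] {F : I.Filtration M}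

lemma stable_colonFiltration (hF : F.Stable) : (colonFiltration F).Stable :=
  hF.of_le fun _ ↦ inf_le_left

lemma exists_forall_inf_colonBy_add_two_le (hF : F.Stable) :
    ∃ c, ∀ j ≥ c, F.N j ⊓ (F.N (j + 2)).colonBy I ≤ F.N (j + 1) := by
  obtain ⟨c, hc⟩ := stable_colonFiltration hF
  refine ⟨c + 1, fun j hj ↦ ?_⟩
  obtain ⟨k, rfl⟩ := Nat.exists_eq_add_of_le' (Nat.one_le_of_lt hj)
  calc (colonFiltration F).N (k + 1)
    _ = I • (colonFiltration F).N k := (hc k (by lia)).symm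
    _ ≤ I • (F.N (k + 2)).colonBy I := smul_mono_right I inf_le_right
    _ ≤ F.N (k + 2) := smul_colonBy_le _ I

lemma exists_forall_inf_colonBy_le (hF : F.Stable) :
    ∃ c, ∀ d ≥ c, ∀ n ≥ d, F.N d ⊓ (F.N (n + 1)).colonBy I ≤ F.N n := by
  obtain ⟨c, hc⟩ := exists_forall_inf_colonBy_add_two_le hF
  refine ⟨c, fun d hd n hn ↦ ?_⟩
  induction n, hn using Nat.le_induction with
  | base => exact inf_le_left
  | succ n hn ih =>
    have hstep : F.N d ⊓ (F.N (n + 2)).colonBy I ≤ F.N n :=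
      (inf_le_inf_left _ (colonBy_mono (F.mono (n + 1)) le_rfl)).trans ih
    exact (le_inf hstep inf_le_right).trans (hc n (hd.trans hn))

lemma exists_forall_length_colonBy_add_length_quotient_le (hF : F.Stable) (hIJ : I ≤ J) :
    ∃ c, ∀ d ≥ c, ∀ n ≥ d,
      Module.length R (((F.N (n + 1)).colonBy J).map (F.N (n + 1)).mkQ)
          + Module.length R (M ⧸ F.N n) ≤
        Module.length R (M ⧸ F.N (n + 1)) + Module.length R (M ⧸ F.N d) := by
  obtain ⟨c, hc⟩ := exists_forall_inf_colonBy_le hF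
  refine ⟨c, fun d hd n hn ↦ length_map_mkQ_add_length_quotient_le (F.mono n)
    (F.antitone (hn.trans n.le_succ)) ?_⟩
  rw [inf_comm]
  exact (inf_le_inf_left _ (colonBy_mono le_rfl hIJ)).trans (hc d hd n hn)

end Colon

section Polynomial

lemma taylor_coeff_of_natDegree_le_succ {R : Type*} [CommSemiring R] {P : R[X]} {k : ℕ} (r : R)
    (hP : P.natDegree ≤ k + 1) :
    (taylor r P).coeff k = P.coeff k + (k + 1) * r * P.coeff (k + 1) := by
  have hdeg : (hasseDeriv k P).natDegree < 2 := by
    have := natDegree_hasseDeriv_le P k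
    lia
  rw [taylor_coeff, eval_eq_sum_range' hdeg]
  simp [hasseDeriv_coeff, Finset.sum_range_succ, add_comm 1 k, mul_right_comm]

variable {𝕜 : Type*} [NormedField 𝕜] [LinearOrder 𝕜] [IsStrictOrderedRing 𝕜] [OrderTopology 𝕜]
  [Archimedean 𝕜] {P Q : 𝕜[X]} {k : ℕ}

lemma coeff_nonneg_of_eventually_eval_natCast_nonneg (hk : P.natDegree ≤ k)
    (h : ∀ᶠ n : ℕ in atTop, 0 ≤ P.eval (n : 𝕜)) : 0 ≤ P.coeff k := by
  by_contra! hneg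
  obtain rfl : P.natDegree = k := hk.antisymm (le_natDegree_of_ne_zero hneg.ne)
  rcases P.natDegree.eq_zero_or_pos with hconst | hpos
  · obtain ⟨n, hn⟩ := h.exists
    rw [eq_C_of_natDegree_eq_zero hconst, eval_C, ← hconst] at hn
    exact hneg.not_ge hn
  · have hlim : Tendsto (fun n : ℕ ↦ P.eval (n : 𝕜)) atTop atBot :=
      (P.tendsto_atBot_of_leadingCoeff_nonpos (natDegree_pos_iff_degree_pos.1 hpos) hneg.le).comp
        tendsto_natCast_atTop_atTop
    obtain ⟨n, hn, hn'⟩ := (h.and (hlim.eventually_lt_atBot 0)).exists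
    exact hn'.not_ge hn

lemma coeff_le_succ_mul_coeff_succ_of_eventually_eval_le (hk : k ≠ 0)
    (hP : P.natDegree ≤ k + 1) (hQ : Q.natDegree ≤ k) (c : 𝕜)
    (h : ∀ᶠ n : ℕ in atTop, Q.eval (n + 1 : 𝕜) + P.eval (n : 𝕜) ≤ P.eval (n + 1 : 𝕜) + c) :
    Q.coeff k ≤ (k + 1) * P.coeff (k + 1) := by
  set S : 𝕜[X] := taylor 1 P - P - taylor 1 Q + C c with hS
  have hcoeff : ∀ j ≥ k, S.coeff j = (j + 1) * P.coeff (j + 1) - Q.coeff j := fun j hj ↦ by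
    rw [hS, coeff_add, coeff_sub, coeff_sub, taylor_coeff_of_natDegree_le_succ 1 (by lia),
      taylor_coeff_of_natDegree_le_succ 1 (by lia), coeff_C_of_ne_zero (by lia),
      coeff_eq_zero_of_natDegree_lt (show Q.natDegree < j + 1 by lia)]
    ring
  have hdeg : S.natDegree ≤ k := natDegree_le_iff_coeff_eq_zero.2 fun j hj ↦ by
    rw [hcoeff j hj.le, coeff_eq_zero_of_natDegree_lt (show P.natDegree < j + 1 by lia),
      coeff_eq_zero_of_natDegree_lt (show Q.natDegree < j by lia), mul_zero, sub_zero]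
  have hnonneg : 0 ≤ S.coeff k := by
    refine coeff_nonneg_of_eventually_eval_natCast_nonneg hdeg (h.mono fun n hn ↦ ?_)
    simp only [hS, eval_add, eval_sub, taylor_eval, eval_C]
    linarith
  rwa [hcoeff k le_rfl, sub_nonneg] at hnonneg

end Polynomial

theorem statement1_general {R M : Type*} [CommRing R] [IsNoetherianRing R]
    [AddCommGroup M] [Module R M] [Module.Finite R M] {I J : Ideal R} (hIJ : I ≤ J)
    {t : ℕ} (ht : 2 ≤ t) {P Q : ℚ[X]} (hPdeg : P.natDegree = t) (hQdeg : Q.natDegree = t - 1)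
    (hP : ∀ᶠ n : ℕ in atTop, ∃ len : ℕ,
      moduleLength R (M ⧸ (I ^ (n + 1) • ⊤ : Submodule R M)) = len ∧ (len : ℚ) = P.eval (n : ℚ))
    (hQ : ∀ᶠ n : ℕ in atTop, ∃ len : ℕ,
      moduleLength R (((I ^ (n + 1) • ⊤ : Submodule R M).colonBy J).map
        (I ^ (n + 1) • ⊤ : Submodule R M).mkQ) = len ∧ (len : ℚ) = Q.eval (n : ℚ)) :
    ((t - 1).factorial : ℚ) * Q.leadingCoeff ≤ (t.factorial : ℚ) * P.leadingCoeff := by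
  obtain ⟨s, rfl⟩ := Nat.exists_eq_add_of_le' (Nat.one_le_of_lt ht)
  rw [Nat.add_sub_cancel] at hQdeg ⊢
  simp only [moduleLength_eq_length] at hP hQ
  obtain ⟨c, hc⟩ := exists_forall_length_colonBy_add_length_quotient_le
    (I.stableFiltration_stable (⊤ : Submodule R M)) hIJ
  obtain ⟨d, ⟨L, hL, -⟩, hcd⟩ := (hP.and (eventually_ge_atTop c)).exists
  have hrec : ∀ᶠ n : ℕ in atTop,
      Q.eval (n + 1 : ℚ) + P.eval (n : ℚ) ≤ P.eval (n + 1 : ℚ) + L := by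
    filter_upwards [hP, (tendsto_add_atTop_nat 1).eventually hP,
      (tendsto_add_atTop_nat 1).eventually hQ, eventually_ge_atTop d]
    rintro n ⟨a, ha, haP⟩ ⟨b, hb, hbP⟩ ⟨q, hq, hqQ⟩ hdn
    have hlen : (q + a : ℕ∞) ≤ b + L := by
      rw [← ha, ← hb, ← hq, ← hL]
      exact hc (d + 1) (by lia) (n + 1) (by lia)
    push_cast at hbP hqQ
    rw [← haP, ← hbP, ← hqQ]
    exact_mod_cast hlen
  have hcoeff : Q.leadingCoeff ≤ (s + 1) * P.leadingCoeff := by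
    rw [leadingCoeff, leadingCoeff, hPdeg, hQdeg]
    exact coeff_le_succ_mul_coeff_succ_of_eventually_eval_le (by lia) hPdeg.le hQdeg.le L hrec
  calc (s.factorial : ℚ) * Q.leadingCoeff
    _ ≤ s.factorial * ((s + 1) * P.leadingCoeff) := by gcongr
    _ = ((s + 1).factorial : ℚ) * P.leadingCoeff := by
        rw [Nat.factorial_succ]
        push_cast
        ring

/-- If `dim M = t ≥ 2` then `f⁰_I(M) ≤ e⁰_I(M)`. -/
theorem statement1 {R M : Type*} [CommRing R] [IsNoetherianRing R] [IsLocalRing R]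
    [AddCommGroup M] [Module R M] [Module.Finite R M]
    (I : Ideal R) (hI : I.radical = maximalIdeal R)
    (t : ℕ) (ht : 2 ≤ t)
    (hdim : ringKrullDim (R ⧸ Module.annihilator R M) = t)
    (P Q : Polynomial ℚ) (hPdeg : P.natDegree = t) (hQdeg : Q.natDegree = t - 1)
    (hP : ∃ N : ℕ, ∀ n ≥ N, ∃ len : ℕ,
      moduleLength R (M ⧸ (I ^ (n + 1) • ⊤ : Submodule R M)) = len ∧
        (len : ℚ) = P.eval (n : ℚ))
    (hQ : ∃ N : ℕ, ∀ n ≥ N, ∃ len : ℕ,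
      moduleLength R ↥(Submodule.map (I ^ (n + 1) • ⊤ : Submodule R M).mkQ
        ((I ^ (n + 1) • ⊤ : Submodule R M).colonBy (maximalIdeal R))) = len ∧
        (len : ℚ) = Q.eval (n : ℚ)) :
    ((t - 1).factorial : ℚ) * Q.leadingCoeff ≤ (t.factorial : ℚ) * P.leadingCoeff := by
  exact statement1_general (hI ▸ Ideal.le_radical) ht hPdeg hQdeg
    (eventually_atTop.2 hP) (eventually_atTop.2 hQ)
end

section
/- Let K be a field, d ≥ 1 and ℓ ≥ 1 integers, and let R = K[[x_1, …, x_d, y_1, …, y_ℓ]]/[(x_1, …, x_d)(y_1, …, y_ℓ) + (y_1, …, y_ℓ)^2] with maximal ideal m. Then for all n ≥ 1, ℓ_R((m^{n+1} :_R m)/m^{n+1}) = binom(n+d−1, d−1) + ℓ. -/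
open IsLocalRing Submodule

set_option synthInstance.maxHeartbeats 800000
set_option maxHeartbeats 1600000

/-!
Write `𝔪` for the maximal ideal of `S = K⟦x, y⟧` as well. Since `(x)(y) + (y)² = 𝔪 (y)`, the
preimage in `S` of the `(n + 1)`-st power of the maximal ideal of `R` is the monomial ideal
`I = 𝔪 ^ (n + 1) + 𝔪 (y)`. For any monomial ideal `I` the socle `(I : 𝔪) / I` of `S / I` has as
basis the monomials that are maximal, for divisibility, among those outside `I`. Here these are the
monomials of degree `n` in `x` together with the variables `y_j`.
-/

open scoped Pointwise

section Length

variable {R M V : Type*} [Ring R] [AddCommGroup M] [Module R M] [AddCommGroup V] [Module R V]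

theorem length_map_mkQ_eq_of_surjective {C N : Submodule R M} (F : C →ₗ[R] V)
    (hF : Function.Surjective F) (hker : LinearMap.ker F = N.comap C.subtype) :
    Module.length R (C.map N.mkQ) = Module.length R V := by
  have hker' : LinearMap.ker (N.mkQ.submoduleMap C) = LinearMap.ker F := by
    rw [hker]
    ext c
    simp [← Subtype.coe_inj]
  exact (((N.mkQ.submoduleMap C).quotKerEquivOfSurjective
      (N.mkQ.submoduleMap_surjective C)).symm ≪≫ₗ
    Submodule.quotEquivOfEq _ _ hker' ≪≫ₗ F.quotKerEquivOfSurjective hF).length_eq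

end Length

section BaseChange

variable {S R : Type*} [CommRing S] [CommRing R] [Algebra S R]

theorem length_map_mkQ_eq_length_comap (hSR : Function.Surjective (algebraMap S R))
    (C Q : Ideal R) :
    Module.length R (Submodule.map (Submodule.mkQ Q) C) =
      Module.length S (Submodule.map (Submodule.mkQ (Q.comap (algebraMap S R)))
        (C.comap (algebraMap S R))) := by
  rw [← Module.length_eq_of_surjective hSR]
  let F : C.comap (algebraMap S R) →ₗ[S] Submodule.map (Submodule.mkQ Q) C :=
    { toFun := fun f => ⟨Submodule.mkQ Q (algebraMap S R f), Submodule.mem_map_of_mem f.2⟩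
      map_add' := fun f g => by ext; simp
      map_smul' := fun s f => by ext; simp [Algebra.smul_def] }
  refine (length_map_mkQ_eq_of_surjective F ?_ ?_).symm
  · rintro ⟨_, c, hc, rfl⟩
    obtain ⟨f, rfl⟩ := hSR c
    exact ⟨⟨f, hc⟩, rfl⟩
  · ext f
    exact Subtype.ext_iff.trans (Submodule.Quotient.mk_eq_zero Q)

theorem comap_pow_of_surjective (hSR : Function.Surjective (algebraMap S R)) (m : Ideal R)
    (k : ℕ) :
    (m ^ k).comap (algebraMap S R) =
      m.comap (algebraMap S R) ^ k ⊔ RingHom.ker (algebraMap S R) := by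
  conv_lhs => rw [← Ideal.map_comap_of_surjective _ hSR m, ← Ideal.map_pow]
  rw [Ideal.comap_map_of_surjective _ hSR, RingHom.ker_eq_comap_bot]

theorem comap_colonBy (hSR : Function.Surjective (algebraMap S R)) (Q m : Ideal R) :
    Ideal.comap (algebraMap S R) (Submodule.colonBy Q m) =
      Submodule.colonBy (Q.comap (algebraMap S R)) (m.comap (algebraMap S R)) := by
  ext f
  constructor
  · intro hf g hg
    simpa using hf (algebraMap S R g) hg
  · intro hf r hr
    obtain ⟨g, rfl⟩ := hSR r
    simpa using hf g hr

end BaseChange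

section MonomialIdeal

open MvPowerSeries

variable {σ R : Type*} [CommSemiring R] {A B : Set (σ →₀ ℕ)} {f : MvPowerSeries σ R} {e : σ →₀ ℕ}

variable (R) in
/-- The ideal of `R⟦σ⟧` generated by the monomials whose exponents lie in `A`. -/
noncomputable def monomialIdeal (A : Set (σ →₀ ℕ)) : Ideal (MvPowerSeries σ R) :=
  Ideal.span ((fun a => monomial a 1) '' A)

theorem monomial_mem_monomialIdeal {a : σ →₀ ℕ} (ha : a ∈ A) :
    (monomial a 1 : MvPowerSeries σ R) ∈ monomialIdeal R A :=
  Ideal.subset_span ⟨a, ha, rfl⟩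

theorem monomialIdeal_union : monomialIdeal R (A ∪ B) = monomialIdeal R A ⊔ monomialIdeal R B := by
  simp only [monomialIdeal, Set.image_union, Ideal.span_union]

theorem monomialIdeal_add : monomialIdeal R (A + B) = monomialIdeal R A * monomialIdeal R B := by
  rw [monomialIdeal, monomialIdeal, monomialIdeal, Ideal.span_mul_span']
  congr 1
  exact Set.image_image2_distrib fun a b => by rw [monomial_mul_monomial, one_mul]

theorem monomialIdeal_nsmul (k : ℕ) : monomialIdeal R (k • A) = monomialIdeal R A ^ k := by
  induction k with
  | zero => simp [monomialIdeal]
  | succ k ih => rw [succ_nsmul, pow_succ, monomialIdeal_add, ih]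

theorem span_range_X_comp {ι : Type*} (v : ι → σ) :
    Ideal.span (Set.range fun i => (X (v i) : MvPowerSeries σ R)) =
      monomialIdeal R (Set.range fun i => Finsupp.single (v i) 1) := by
  rw [monomialIdeal, ← Set.range_comp]
  rfl

theorem coeff_eq_zero_of_mem_monomialIdeal (hf : f ∈ monomialIdeal R A)
    (he : e ∉ upperClosure A) : coeff e f = 0 := by
  classical
  induction hf using Submodule.span_induction generalizing e with
  | mem _ h =>
    obtain ⟨a, ha, rfl⟩ := h
    exact coeff_monomial_ne (fun h : e = a => he (h ▸ subset_upperClosure ha)) 1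
  | zero => exact map_zero _
  | add f g _ _ hf hg => rw [map_add, hf he, hg he, add_zero]
  | smul g f _ hf =>
    rw [smul_eq_mul, coeff_mul]
    refine Finset.sum_eq_zero fun p hp => ?_
    have hle : p.2 ≤ e := Finset.HasAntidiagonal.mem_antidiagonal.1 hp ▸ le_add_self
    rw [hf fun h => he ((upperClosure A).upper hle h), mul_zero]

theorem mem_monomialIdeal_of_coeff_eq_zero {R : Type*} [CommRing R] {f : MvPowerSeries σ R}
    (hA : A.Finite) (hf : ∀ e ∉ upperClosure A, coeff e f = 0) :
    f ∈ monomialIdeal R A := by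
  classical
  induction A, hA using Set.Finite.induction_on generalizing f with
  | empty =>
    have hf0 : f = 0 := by
      ext e
      exact hf e (by simp)
    exact hf0 ▸ Ideal.zero_mem _
  | @insert a A _ _ ih =>
    let g : MvPowerSeries σ R := fun e => coeff (e + a) f
    have hg (e : σ →₀ ℕ) : coeff e g = coeff (e + a) f := rfl
    have hrest : f - monomial a 1 * g ∈ monomialIdeal R A := by
      refine ih fun e he => ?_
      rw [map_sub, coeff_monomial_mul, hg]
      by_cases hae : a ≤ e
      · rw [if_pos hae, tsub_add_cancel_of_le hae, one_mul, sub_self]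
      · rw [if_neg hae, sub_zero]
        exact hf e (by simpa [hae] using he)
    rw [Set.insert_eq, monomialIdeal_union, ← add_sub_cancel (monomial a 1 * g) f]
    exact Submodule.add_mem_sup
      (Ideal.mul_mem_right g _ (monomial_mem_monomialIdeal (Set.mem_singleton a))) hrest

theorem mem_monomialIdeal_iff {R : Type*} [CommRing R] {f : MvPowerSeries σ R} (hA : A.Finite) :
    f ∈ monomialIdeal R A ↔ ∀ e ∉ upperClosure A, coeff e f = 0 :=
  ⟨fun hf _ he => coeff_eq_zero_of_mem_monomialIdeal hf he, mem_monomialIdeal_of_coeff_eq_zero hA⟩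

end MonomialIdeal

section Socle

open MvPowerSeries

theorem coeff_mul_eq_constantCoeff_mul_coeff {σ R : Type*} [CommSemiring R]
    {f : MvPowerSeries σ R} {e : σ →₀ ℕ} (hf : ∀ b < e, coeff b f = 0) (g : MvPowerSeries σ R) :
    coeff e (g * f) = constantCoeff g * coeff e f := by
  classical
  rw [coeff_mul, Finset.sum_eq_single (0, e)]
  · rw [coeff_zero_eq_constantCoeff_apply]
  · rintro ⟨a, b⟩ hab hne
    obtain rfl : a + b = e := Finset.HasAntidiagonal.mem_antidiagonal.1 hab
    have ha : a ≠ 0 := by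
      rintro rfl
      simp at hne
    rw [hf b (lt_add_of_pos_left b (pos_iff_ne_zero.2 ha)), mul_zero]
  · intro h
    exact absurd (Finset.HasAntidiagonal.mem_antidiagonal.2 (zero_add e)) h

variable {σ K : Type*} [Field K] {A : Set (σ →₀ ℕ)} {f : MvPowerSeries σ K}

theorem mem_maximalIdeal_iff_constantCoeff_eq_zero :
    f ∈ maximalIdeal (MvPowerSeries σ K) ↔ constantCoeff f = 0 := by
  rw [mem_maximalIdeal, mem_nonunits_iff, isUnit_iff_constantCoeff, isUnit_iff_ne_zero, not_not]

theorem maximalIdeal_eq_monomialIdeal [Finite σ] :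
    maximalIdeal (MvPowerSeries σ K) =
      monomialIdeal K (Set.range fun i => Finsupp.single i 1) := by
  have hvars (e : σ →₀ ℕ) :
      e ∉ upperClosure (Set.range fun i : σ => Finsupp.single i 1) ↔ e = 0 := by
    simp only [mem_upperClosure, Set.exists_range_iff, Finsupp.single_le_iff, not_exists, not_le,
      Nat.lt_one_iff, DFunLike.ext_iff, Finsupp.coe_zero, Pi.zero_apply]
  ext f
  rw [mem_maximalIdeal_iff_constantCoeff_eq_zero, mem_monomialIdeal_iff (Set.finite_range _)]
  simp only [hvars, forall_eq, coeff_zero_eq_constantCoeff]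

theorem mem_monomialIdeal_colonBy_iff (hA : A.Finite) :
    f ∈ Submodule.colonBy (monomialIdeal K A) (maximalIdeal _) ↔
      ∀ e ∉ upperClosure A, ∀ b < e, coeff b f = 0 := by
  constructor
  · intro hf e he b hbe
    obtain ⟨a, rfl⟩ := exists_add_of_le hbe.le
    have ha : a ≠ 0 := by
      rintro rfl
      simp at hbe
    have hmem : (monomial a 1 : MvPowerSeries σ K) ∈ maximalIdeal _ := by
      rw [mem_maximalIdeal_iff_constantCoeff_eq_zero, ← coeff_zero_eq_constantCoeff_apply,
        coeff_monomial_ne ha.symm]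
    have hcoeff := (mem_monomialIdeal_iff hA).1 (hf _ hmem) (b + a) he
    rwa [add_comm, smul_eq_mul, coeff_add_monomial_mul, one_mul] at hcoeff
  · intro hf g hg
    refine (mem_monomialIdeal_iff hA).2 fun e he => ?_
    rw [smul_eq_mul, coeff_mul_eq_constantCoeff_mul_coeff (hf e he),
      mem_maximalIdeal_iff_constantCoeff_eq_zero.1 hg, zero_mul]

/-- The exponents of the monomials that are maximal, for divisibility, among those outside the
monomial ideal generated by `A`; they index a basis of the socle of the quotient by that ideal. -/
def socleExponents (A : Set (σ →₀ ℕ)) : Set (σ →₀ ℕ) :=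
  {e | Maximal (· ∉ upperClosure A) e}

theorem exists_mem_colonBy_coeff_eq (hA : A.Finite) (v : socleExponents A → K) :
    ∃ f ∈ Submodule.colonBy (monomialIdeal K A) (maximalIdeal _), ∀ e, coeff e.1 f = v e := by
  classical
  let f : MvPowerSeries σ K := fun e =>
    if he : e ∈ socleExponents A then v ⟨e, he⟩ else 0
  refine ⟨f, (mem_monomialIdeal_colonBy_iff hA).2 fun e he b hbe => ?_, fun e => dif_pos e.2⟩
  exact dif_neg fun hb => hbe.not_ge (hb.2 he hbe.le)

theorem mem_monomialIdeal_iff_of_mem_colonBy (hA : A.Finite)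
    (hf : f ∈ Submodule.colonBy (monomialIdeal K A) (maximalIdeal _)) :
    f ∈ monomialIdeal K A ↔ ∀ e ∈ socleExponents A, coeff e f = 0 := by
  rw [mem_monomialIdeal_iff hA]
  refine ⟨fun h e he => h e he.1, fun h e he => ?_⟩
  by_cases hmax : e ∈ socleExponents A
  · exact h e hmax
  · obtain ⟨e', hlt, he'⟩ := (not_maximal_iff_exists_gt (P := (· ∉ upperClosure A)) he).1 hmax
    exact (mem_monomialIdeal_colonBy_iff hA).1 hf e' he' e hlt

theorem length_colonBy_maximalIdeal_monomialIdeal (hA : A.Finite) :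
    Module.length (MvPowerSeries σ K)
        (Submodule.map (Submodule.mkQ (monomialIdeal K A))
          (Submodule.colonBy (monomialIdeal K A) (maximalIdeal _))) =
      (socleExponents A).encard := by
  let _ : Algebra (MvPowerSeries σ K) K := constantCoeff.toAlgebra
  have hK : Module.length (MvPowerSeries σ K) K = 1 := by
    rw [Module.length_eq_of_surjective (R := K) (fun c => ⟨C c, constantCoeff_C c⟩),
      Module.length_eq_one]
  let F : Submodule.colonBy (monomialIdeal K A) (maximalIdeal _) →ₗ[MvPowerSeries σ K]
      (socleExponents A → K) :=
    { toFun := fun f e => coeff e.1 f.1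
      map_add' := fun f g => by ext; simp
      map_smul' := fun g f => by
        ext e
        exact coeff_mul_eq_constantCoeff_mul_coeff
          ((mem_monomialIdeal_colonBy_iff hA).1 f.2 e e.2.1) g }
  rw [length_map_mkQ_eq_of_surjective F, Module.length_pi, hK, mul_one, ENat.card_coe_set_eq]
  · intro v
    obtain ⟨f, hf, hfv⟩ := exists_mem_colonBy_coeff_eq hA v
    exact ⟨⟨f, hf⟩, funext hfv⟩
  · ext f
    simp [F, mem_monomialIdeal_iff_of_mem_colonBy hA f.2, funext_iff]

end Socle

section Exponents

variable {σ τ : Type*}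

theorem eq_of_le_of_degree_le {a b : σ →₀ ℕ} (hab : a ≤ b) (hdeg : b.degree ≤ a.degree) :
    a = b := by
  obtain ⟨c, rfl⟩ := exists_add_of_le hab
  have hc : c.degree = 0 := by
    rw [map_add] at hdeg
    omega
  rw [(Finsupp.degree_eq_zero_iff c).1 hc, add_zero]

theorem notMem_upperClosure_degree_eq_iff {k : ℕ} {e : σ →₀ ℕ} :
    e ∉ upperClosure {a : σ →₀ ℕ | a.degree = k} ↔ e.degree < k := by
  rw [← not_le, not_iff_not, mem_upperClosure]
  constructor
  · rintro ⟨a, rfl, hae⟩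
    exact Finsupp.degree_mono hae
  · intro h
    obtain ⟨a, hae, ha⟩ := e.exists_le_degree_eq k h
    exact ⟨a, ha, hae⟩

theorem mem_upperClosure_range_add_range_iff {ι κ α : Type*} [Add α] [Preorder α] {u : ι → α}
    {v : κ → α} {e : α} :
    e ∈ upperClosure (Set.range u + Set.range v) ↔ ∃ i j, u i + v j ≤ e := by
  simp [mem_upperClosure, Set.mem_add]

theorem exists_single_add_single_le {i : σ} {e : σ →₀ ℕ} (hi : e i ≠ 0)
    (he : e ≠ Finsupp.single i 1) : ∃ k, Finsupp.single k 1 + Finsupp.single i 1 ≤ e := by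
  obtain ⟨b, rfl⟩ := exists_add_of_le (Finsupp.single_le_iff.2 (Nat.one_le_iff_ne_zero.2 hi))
  have hb : b ≠ 0 := by
    rintro rfl
    exact he (add_zero _)
  obtain ⟨k, hk⟩ := Finsupp.ne_iff.1 hb
  refine ⟨k, ?_⟩
  rw [add_comm]
  gcongr
  exact Finsupp.single_le_iff.2 (Nat.one_le_iff_ne_zero.2 hk)

theorem notMem_upperClosure_single_add_single_inr_iff {e : (σ ⊕ τ) →₀ ℕ} :
    e ∉ upperClosure ((Set.range fun k : σ ⊕ τ => Finsupp.single k 1) +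
        Set.range fun j : τ => Finsupp.single (Sum.inr j) 1) ↔
      (∀ j, e (Sum.inr j) = 0) ∨ ∃ j, e = Finsupp.single (Sum.inr j) 1 := by
  rw [mem_upperClosure_range_add_range_iff]
  constructor
  · contrapose!
    rintro ⟨⟨j, hj⟩, he⟩
    obtain ⟨k, hk⟩ := exists_single_add_single_le hj (he j)
    exact ⟨k, j, hk⟩
  · rintro (hx | ⟨i, rfl⟩) ⟨k, j, hle⟩
    · simpa [hx] using hle (Sum.inr j)
    · simpa using Finsupp.degree_mono hle

variable (σ τ) in
/-- The exponents of monomials generating `𝔪 ^ (n + 1) + 𝔪 (y)`, where the variables `x` are indexed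
by `σ` and the variables `y` by `τ`. -/
def powSupGenerators (n : ℕ) : Set ((σ ⊕ τ) →₀ ℕ) :=
  {e | e.degree = n + 1} ∪
    ((Set.range fun k => Finsupp.single k 1) + Set.range fun j => Finsupp.single (Sum.inr j) 1)

theorem finite_powSupGenerators [Finite σ] [Finite τ] (n : ℕ) : (powSupGenerators σ τ n).Finite :=
  (Finsupp.finite_of_degree_eq _).union ((Set.finite_range _).add (Set.finite_range _))

variable {n : ℕ} {e : (σ ⊕ τ) →₀ ℕ}

theorem notMem_upperClosure_powSupGenerators_iff (hn : 1 ≤ n) :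
    e ∉ upperClosure (powSupGenerators σ τ n) ↔
      ((∀ j, e (Sum.inr j) = 0) ∧ e.degree ≤ n) ∨ ∃ j, e = Finsupp.single (Sum.inr j) 1 := by
  rw [powSupGenerators, upperClosure_union, UpperSet.mem_inf_iff, not_or,
    notMem_upperClosure_degree_eq_iff, notMem_upperClosure_single_add_single_inr_iff,
    Nat.lt_succ_iff]
  have hsingle : (∃ j, e = Finsupp.single (Sum.inr j) 1) → e.degree ≤ n := by
    rintro ⟨j, rfl⟩
    rwa [Finsupp.degree_single]
  tauto

theorem mem_socleExponents_powSupGenerators_iff [Nonempty σ] (hn : 1 ≤ n) :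
    e ∈ socleExponents (powSupGenerators σ τ n) ↔
      ((∀ j, e (Sum.inr j) = 0) ∧ e.degree = n) ∨ ∃ j, e = Finsupp.single (Sum.inr j) 1 := by
  simp only [socleExponents, Set.mem_ofPred_eq, maximal_iff,
    notMem_upperClosure_powSupGenerators_iff hn]
  constructor
  · rintro ⟨⟨hx, hdeg⟩ | hy, hmax⟩
    · refine Or.inl ⟨hx, hdeg.antisymm ?_⟩
      by_contra! hlt
      obtain ⟨i⟩ := ‹Nonempty σ›
      have heq := hmax (y := e + Finsupp.single (Sum.inl i) 1)
        (Or.inl ⟨by simpa using hx, by simpa using hlt⟩) le_self_add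
      simp at heq
    · exact Or.inr hy
  · rintro (⟨hx, hdeg⟩ | ⟨j, rfl⟩)
    · refine ⟨Or.inl ⟨hx, hdeg.le⟩, fun b hb heb => eq_of_le_of_degree_le heb ?_⟩
      rcases hb with ⟨-, hb⟩ | ⟨j, rfl⟩
      · rwa [hdeg]
      · rwa [hdeg, Finsupp.degree_single]
    · refine ⟨Or.inr ⟨j, rfl⟩, fun b hb hjb => eq_of_le_of_degree_le hjb ?_⟩
      rcases hb with ⟨hb, -⟩ | ⟨i, rfl⟩
      · simp [hb] at hjb
      · simp

theorem encard_degree_eq_of_inr_eq_zero [Fintype σ] (n : ℕ) :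
    {e : (σ ⊕ τ) →₀ ℕ | (∀ j, e (Sum.inr j) = 0) ∧ e.degree = n}.encard =
      (Fintype.card σ + n - 1).choose n := by
  classical
  have hsupp (e : (σ ⊕ τ) →₀ ℕ) :
      e.support ⊆ Finset.univ.map Function.Embedding.inl ↔ ∀ j, e (Sum.inr j) = 0 := by
    simp [Finset.subset_iff]
  have hset : {e : (σ ⊕ τ) →₀ ℕ | (∀ j, e (Sum.inr j) = 0) ∧ e.degree = n} =
      ↑(Finset.finsuppAntidiag (Finset.univ.map (Function.Embedding.inl : σ ↪ σ ⊕ τ)) n) := by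
    ext e
    rw [Finset.mem_coe, Finset.mem_finsuppAntidiag, and_comm, Set.mem_ofPred_eq, ← hsupp]
    refine and_congr_right fun he => ?_
    rw [Finsupp.degree_apply, Finset.sum_subset he fun k _ hk => Finsupp.notMem_support_iff.1 hk]
  rw [hset, Set.encard_coe_eq_coe_finsetCard, Finset.card_finsuppAntidiag_nat_eq_choose,
    Finset.card_map, Finset.card_univ]

theorem encard_socleExponents_powSupGenerators [Fintype σ] [Nonempty σ] (hn : 1 ≤ n) :
    (socleExponents (powSupGenerators σ τ n)).encard =
      (Fintype.card σ + n - 1).choose n + ENat.card τ := by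
  have hinj : Function.Injective fun j : τ => (Finsupp.single (Sum.inr j) 1 : (σ ⊕ τ) →₀ ℕ) :=
    (Finsupp.single_left_injective one_ne_zero).comp Sum.inr_injective
  have hdisj : Disjoint {e : (σ ⊕ τ) →₀ ℕ | (∀ j, e (Sum.inr j) = 0) ∧ e.degree = n}
      (Set.range fun j => Finsupp.single (Sum.inr j) 1) := by
    rw [Set.disjoint_left]
    rintro _ ⟨hx, -⟩ ⟨j, rfl⟩
    simpa using hx j
  rw [← encard_degree_eq_of_inr_eq_zero (τ := τ), ← Set.encard_univ, ← hinj.encard_image,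
    Set.image_univ, ← Set.encard_union_eq hdisj]
  congr 1
  ext e
  simp only [mem_socleExponents_powSupGenerators_iff hn, Set.mem_union, Set.mem_ofPred_eq,
    Set.mem_range, eq_comm]

end Exponents

theorem maximalIdeal_pow_sup_eq_monomialIdeal {σ τ K : Type*} [Field K] [Finite σ] [Finite τ]
    (n : ℕ) :
    maximalIdeal (MvPowerSeries (σ ⊕ τ) K) ^ (n + 1) ⊔
        (Ideal.span (Set.range fun i : σ => MvPowerSeries.X (Sum.inl i)) *
            Ideal.span (Set.range fun j : τ => MvPowerSeries.X (Sum.inr j)) +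
          Ideal.span (Set.range fun j : τ => MvPowerSeries.X (Sum.inr j)) ^ 2) =
      monomialIdeal K (powSupGenerators σ τ n) := by
  have hvars : (Set.range fun k : σ ⊕ τ => (Finsupp.single k 1 : (σ ⊕ τ) →₀ ℕ)) =
      (Set.range fun i => Finsupp.single (Sum.inl i) 1) ∪
        Set.range fun j => Finsupp.single (Sum.inr j) 1 := Sum.range_eq _
  have hpow : {e : (σ ⊕ τ) →₀ ℕ | e.degree = n + 1} =
      (n + 1) • Set.range fun k => Finsupp.single k 1 := by
    simpa using (Finsupp.nsmul_single_one_image (n := n + 1) (s := (Set.univ : Set (σ ⊕ τ)))).symm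
  rw [powSupGenerators, monomialIdeal_union, monomialIdeal_add, hpow, monomialIdeal_nsmul,
    ← maximalIdeal_eq_monomialIdeal, span_range_X_comp, span_range_X_comp, Submodule.add_eq_sup,
    pow_two, ← Ideal.sup_mul, ← monomialIdeal_union, ← hvars, ← maximalIdeal_eq_monomialIdeal]

/-- For `R = K⟦x₁,…,x_d,y₁,…,y_ℓ⟧/[(x)(y)+(y)²]` with maximal ideal `𝔪`,
`ℓ_R((𝔪^{n+1} :_R 𝔪)/𝔪^{n+1}) = C(n+d-1,d-1) + ℓ` for all `n ≥ 1`. -/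
theorem statement15 {K : Type*} [Field K] (d l : ℕ) (hd : 1 ≤ d) (hl : 1 ≤ l)
    (J : Ideal (MvPowerSeries (Fin d ⊕ Fin l) K))
    (hJ : J = Ideal.span (Set.range fun i : Fin d =>
        (MvPowerSeries.X (Sum.inl i) : MvPowerSeries (Fin d ⊕ Fin l) K)) *
      Ideal.span (Set.range fun j : Fin l =>
        (MvPowerSeries.X (Sum.inr j) : MvPowerSeries (Fin d ⊕ Fin l) K)) +
      Ideal.span (Set.range fun j : Fin l =>
        (MvPowerSeries.X (Sum.inr j) : MvPowerSeries (Fin d ⊕ Fin l) K)) ^ 2)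
    (m : Ideal (MvPowerSeries (Fin d ⊕ Fin l) K ⧸ J)) (hm : m.IsMaximal) :
    ∀ n : ℕ, 1 ≤ n →
      moduleLength (MvPowerSeries (Fin d ⊕ Fin l) K ⧸ J)
          ↥(Submodule.map
              (Submodule.mkQ (m ^ (n + 1) :
                Submodule (MvPowerSeries (Fin d ⊕ Fin l) K ⧸ J)
                  (MvPowerSeries (Fin d ⊕ Fin l) K ⧸ J)))
              ((m ^ (n + 1) :
                Submodule (MvPowerSeries (Fin d ⊕ Fin l) K ⧸ J)
                  (MvPowerSeries (Fin d ⊕ Fin l) K ⧸ J)).colonBy m))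
        = (((n + d - 1).choose (d - 1) + l : ℕ) : ℕ∞) := by
  intro n hn
  have : Nonempty (Fin d) := ⟨⟨0, hd⟩⟩
  have hsurj : Function.Surjective (algebraMap (MvPowerSeries (Fin d ⊕ Fin l) K)
    (MvPowerSeries (Fin d ⊕ Fin l) K ⧸ J)) := Ideal.Quotient.mk_surjective
  have hcomap : m.comap (algebraMap _ _) = maximalIdeal (MvPowerSeries (Fin d ⊕ Fin l) K) :=
    eq_maximalIdeal (Ideal.comap_isMaximal_of_surjective _ hsurj)
  have hcomap_pow : (m ^ (n + 1)).comap (algebraMap _ _) =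
      monomialIdeal K (powSupGenerators (Fin d) (Fin l) n) := by
    rw [comap_pow_of_surjective hsurj, hcomap, Ideal.Quotient.algebraMap_eq, Ideal.mk_ker, hJ,
      maximalIdeal_pow_sup_eq_monomialIdeal]
  rw [moduleLength, ← Module.length_eq_height, length_map_mkQ_eq_length_comap hsurj,
    comap_colonBy hsurj, hcomap, hcomap_pow,
    length_colonBy_maximalIdeal_monomialIdeal (finite_powSupGenerators n),
    encard_socleExponents_powSupGenerators hn, Fintype.card_fin, ENat.card_eq_coe_fintype_card,
    Fintype.card_fin, add_comm d n, Nat.choose_symm_of_eq_add (by omega : n + d - 1 = n + (d - 1))]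
  norm_cast
end
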